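/- Let f₀, f₁, …, f_p : ℝⁿ → ℝ be nonconstant polynomial functions, let S := {x ∈ ℝⁿ : f₁(x) ≤ 0, …, f_p(x) ≤ 0} be nonempty, and assume f₀ is bounded from below on S. If the Mangasarian–Fromovitz property at infinity ((MF)∞) holds for the problem inf_{x ∈ S} f₀(x) and the polynomial f₀ is convenient, then the problem has at least one optimal solution, i.e., there exists x* ∈ S with f₀(x*) = inf_{x ∈ S} f₀(x). -/

import Mathlib

/-!
If the infimum is not attained, minimize `f 0` over `S ∩ closedBall 0 R` for larger and larger `R`
to get points `x k` in `S` with `‖x k‖ → ∞`, each minimizing `f 0` over `S ∩ closedBall 0 ‖x k‖`.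
Only finitely many monomials matter, and along an ultrafilter they behave on the points `x k` as on
a monomial curve `t ↦ (t ^ q j * ξ j)` with `t → 0⁺`; this replaces the curve selection lemma. The
leading term of `f i` along the `x k` is therefore the value at `ξ` of `f i` restricted to the face
`Δ(q, Γ(f i))`.

Some coordinate `q j` is negative because `‖x k‖ → ∞`, so convenience of `f 0` gives
`d(q, Γ(f 0)) < 0`, and boundedness of `f 0` on the `x k` then makes its face polynomial vanish at
`ξ`. The property `(MF)∞` supplies a direction `v` in which all face polynomials vanishing at `ξ`
decrease. In logarithmic coordinates, a face polynomial is homogeneous in the direction `q`, so by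
Euler's identity a large multiple of `q` can be added to `v` for free. This makes the dominant
coordinates shrink as well: moving from `x k` in the resulting direction stays in
`S ∩ closedBall 0 ‖x k‖` and decreases `f 0`, a contradiction.
-/

open MvPolynomial Set Filter
open scoped Classical

noncomputable section

/-- The exponent vector of a monomial, viewed as a point of `ℝⁿ`. -/
def expVec {n : ℕ} (κ : Fin n →₀ ℕ) : Fin n → ℝ := fun j => (κ j : ℝ)

/-- The Newton polyhedron at infinity `Γ(f)`: the convex hull of the support of `f`. -/
def NewtonPolyhedron {n : ℕ} (f : MvPolynomial (Fin n) ℝ) : Set (Fin n → ℝ) :=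
  convexHull ℝ (expVec '' (f.support : Set (Fin n →₀ ℕ)))

/-- `d(q, Γ(f)) := min {⟨q, κ⟩ : κ ∈ Γ(f)}`. -/
def NewtonD {n : ℕ} (f : MvPolynomial (Fin n) ℝ) (q : Fin n → ℝ) : ℝ :=
  sInf ((fun κ : Fin n → ℝ => ∑ j, q j * κ j) '' NewtonPolyhedron f)

/-- `Δ(q, Γ(f)) := {κ ∈ Γ(f) : ⟨q, κ⟩ = d(q, Γ(f))}`. -/
def NewtonFace {n : ℕ} (f : MvPolynomial (Fin n) ℝ) (q : Fin n → ℝ) : Set (Fin n → ℝ) :=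
  {κ ∈ NewtonPolyhedron f | ∑ j, q j * κ j = NewtonD f q}

/-- For a set `Δ ⊆ ℝⁿ`, the polynomial `f_Δ := ∑_{κ ∈ Δ} a_κ x^κ`. -/
def facePoly {n : ℕ} (f : MvPolynomial (Fin n) ℝ) (Δ : Set (Fin n → ℝ)) :
    MvPolynomial (Fin n) ℝ :=
  ∑ κ ∈ f.support.filter (fun κ => expVec κ ∈ Δ), monomial κ (f.coeff κ)

/-- `ℝ^J := {x ∈ ℝⁿ : x_j = 0 for all j ∉ J}`. -/
def RJ {n : ℕ} (J : Set (Fin n)) : Set (Fin n → ℝ) := {x | ∀ j ∉ J, x j = 0}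

/-- The restriction of `f` to `ℝ^J` is not constant. -/
def NotConstOn {n : ℕ} (f : MvPolynomial (Fin n) ℝ) (J : Set (Fin n)) : Prop :=
  ∃ x ∈ RJ J, ∃ y ∈ RJ J, eval x f ≠ eval y f

/-- The Mangasarian–Fromovitz property at infinity for `inf {f 0 x : f i x ≤ 0, i = 1,…,p}`. -/
def MFinfty {n p : ℕ} (f : Fin (p + 1) → MvPolynomial (Fin n) ℝ) : Prop :=
  ∀ J : Set (Fin n), J.Nonempty → ∀ q x : Fin n → ℝ,
    NewtonD (f 0) q < 0 →
    (∀ i, NotConstOn (f i) J → NewtonFace (f i) q ⊆ RJ J) →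
    (∀ j, x j = 0 ↔ j ∉ J) →
    (∀ i, i ≠ 0 → eval x (facePoly (f i) (NewtonFace (f i) q)) ≤ 0) →
    ∃ v : Fin n → ℝ, v ≠ 0 ∧ ∀ i, NotConstOn (f i) J →
      eval x (facePoly (f i) (NewtonFace (f i) q)) = 0 →
      ∑ j, eval x (pderiv j (facePoly (f i) (NewtonFace (f i) q))) * v j < 0

/-- Kouchnirenko non-degeneracy at infinity. -/
def NondegenerateAtInfinity {n : ℕ} (f : MvPolynomial (Fin n) ℝ) : Prop :=
  ∀ q : Fin n → ℝ, NewtonD f q < 0 →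
    ∀ x : Fin n → ℝ, (∀ j, x j ≠ 0) →
      ¬ ∀ j, eval x (pderiv j (facePoly f (NewtonFace f q))) = 0

/-- A convenient polynomial. -/
def Convenient {n : ℕ} (f : MvPolynomial (Fin n) ℝ) : Prop :=
  ∀ j : Fin n, ∃ c : ℝ, 0 < c ∧ c • (Pi.single j 1 : Fin n → ℝ) ∈ NewtonPolyhedron f

/-- A bad face of `Γ(f)`. -/
def BadFace {n : ℕ} (f : MvPolynomial (Fin n) ℝ) (Δ : Set (Fin n → ℝ)) : Prop :=
  (∃ q : Fin n → ℝ, Δ = NewtonFace f q) ∧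
  (0 : Fin n → ℝ) ∈ affineSpan ℝ Δ ∧
  ∃ q : Fin n → ℝ, (∃ i j, q i * q j < 0) ∧
    {κ : Fin n → ℝ | ∑ j, q j * κ j = 0} ∩ NewtonPolyhedron f = Δ

/-- The set of critical values of `f`. -/
def K0 {n : ℕ} (f : MvPolynomial (Fin n) ℝ) : Set ℝ :=
  {c | ∃ x : Fin n → ℝ, (∀ j, eval x (pderiv j f) = 0) ∧ eval x f = c}

/-- `Σ∞(f)`: critical values of `f_Δ` over all bad faces `Δ`. -/
def SigmaInfty {n : ℕ} (f : MvPolynomial (Fin n) ℝ) : Set ℝ :=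
  {c | ∃ Δ : Set (Fin n → ℝ), BadFace f Δ ∧ ∃ x : Fin n → ℝ,
    (∀ j, eval x (pderiv j (facePoly f Δ)) = 0) ∧ eval x (facePoly f Δ) = c}

/-- `Σ∞'(f)`: critical values of `f_Δ` on `(ℝ ∖ {0})ⁿ` over all bad faces `Δ`. -/
def SigmaInfty' {n : ℕ} (f : MvPolynomial (Fin n) ℝ) : Set ℝ :=
  {c | ∃ Δ : Set (Fin n → ℝ), BadFace f Δ ∧ ∃ x : Fin n → ℝ, (∀ j, x j ≠ 0) ∧
    (∀ j, eval x (pderiv j (facePoly f Δ)) = 0) ∧ eval x (facePoly f Δ) = c}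

/-- The Euclidean norm on `Fin k → ℝ`. -/
def euclNorm {k : ℕ} (x : Fin k → ℝ) : ℝ := Real.sqrt (∑ j, (x j) ^ 2)

/-- Basic semialgebraic subsets of `ℝ^m`. -/
def BasicSA {m : ℕ} (A : Set (Fin m → ℝ)) : Prop :=
  ∃ (k l : ℕ) (g : Fin k → MvPolynomial (Fin m) ℝ) (h : Fin l → MvPolynomial (Fin m) ℝ),
    A = {x | (∀ i, eval x (g i) = 0) ∧ ∀ i, 0 < eval x (h i)}

/-- Semialgebraic subsets of `ℝ^m`: finite unions of basic semialgebraic sets. -/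
def IsSA {m : ℕ} (A : Set (Fin m → ℝ)) : Prop :=
  ∃ (N : ℕ) (B : Fin N → Set (Fin m → ℝ)), (∀ i, BasicSA (B i)) ∧ A = ⋃ i, B i

/-- A semialgebraic scalar function on a domain `D ⊆ ℝ` (graph is semialgebraic). -/
def IsSAFunOn (D : Set ℝ) (f : ℝ → ℝ) : Prop :=
  IsSA {z : Fin 2 → ℝ | z 0 ∈ D ∧ z 1 = f (z 0)}

/-- A semialgebraic curve `D → ℝⁿ` (graph is semialgebraic). -/
def IsSACurve {n : ℕ} (D : Set ℝ) (φ : ℝ → Fin n → ℝ) : Prop :=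
  IsSA {z : Fin (n + 1) → ℝ | z 0 ∈ D ∧ ∀ j : Fin n, z j.succ = φ (z 0) j}

/-- A semialgebraic map `ℝⁿ → ℝ^p` (graph is semialgebraic). -/
def IsSAMap {n p : ℕ} (F : (Fin n → ℝ) → (Fin p → ℝ)) : Prop :=
  IsSA {z : Fin (n + p) → ℝ |
    (fun i : Fin p => z (Fin.natAdd n i)) = F (fun j : Fin n => z (Fin.castAdd p j))}

open scoped Topology

section UltrafilterLimits

variable {α ι E : Type*} [AddCommGroup E] [Module ℝ E]

theorem ultrafilter_tendsto_nhds_or_atTop_or_atBot (U : Ultrafilter α) (a : α → ℝ) :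
    (∃ L, Tendsto a U (𝓝 L)) ∨ Tendsto a U atTop ∨ Tendsto a U atBot := by
  have h : Tendsto (fun k => (a k : EReal)) U (𝓝 (U.map fun k => (a k : EReal)).lim) :=
    (U.map fun k => (a k : EReal)).le_nhds_lim
  induction hL : (U.map fun k => (a k : EReal)).lim with
  | bot => exact .inr <| .inr <| EReal.tendsto_coe_nhds_bot_iff.1 (hL ▸ h)
  | coe L => exact .inl ⟨L, EReal.tendsto_coe.1 (hL ▸ h)⟩
  | top => exact .inr <| .inl <| EReal.tendsto_coe_nhds_top_iff.1 (hL ▸ h)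

theorem exists_lift_tendsto_of_forall_tendsto [Finite ι] {l : Filter α} [NeBot l]
    (φ : ι → E →ₗ[ℝ] ℝ) (u : α → E) {L : ι → ℝ}
    (hu : ∀ i, Tendsto (fun k => φ i (u k)) l (𝓝 (L i))) :
    ∃ (v : α → E) (w : E), (∀ i k, φ i (v k) = φ i (u k)) ∧
      ∀ ψ : E →ₗ[ℝ] ℝ, Tendsto (fun k => ψ (v k)) l (𝓝 (ψ w)) := by
  have := Fintype.ofFinite ι
  let A := LinearMap.pi φ
  obtain ⟨s, hs⟩ := A.rangeRestrict.exists_rightInverse_of_surjective A.range_rangeRestrict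
  have hL : L ∈ LinearMap.range A :=
    (LinearMap.range A).closed_of_finiteDimensional.mem_of_tendsto (tendsto_pi_nhds.2 hu)
      (.of_forall fun k => ⟨u k, rfl⟩)
  refine ⟨fun k => s (A.rangeRestrict (u k)), s ⟨L, hL⟩, fun i k => ?_, fun ψ => ?_⟩
  · have := LinearMap.congr_fun hs (A.rangeRestrict (u k))
    exact congr_fun (congr_arg Subtype.val this) i
  · have hlim : Tendsto (fun k => A.rangeRestrict (u k)) l (𝓝 ⟨L, hL⟩) :=
      tendsto_subtype_rng.2 (tendsto_pi_nhds.2 hu)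
    exact ((ψ ∘ₗ s).continuous_of_finiteDimensional.tendsto _).comp hlim

theorem exists_forall_tendsto_ultrafilter [Finite ι] (U : Ultrafilter α) (φ : ι → E →ₗ[ℝ] ℝ)
    (u : α → E) :
    ∃ q w : E, ∀ i, (φ i q = 0 → Tendsto (fun k => φ i (u k)) U (𝓝 (φ i w))) ∧
      (0 < φ i q → Tendsto (fun k => φ i (u k)) U atTop) ∧
      (φ i q < 0 → Tendsto (fun k => φ i (u k)) U atBot) := by
  let converging : Set ι := {i | ∃ L, Tendsto (fun k => φ i (u k)) U (𝓝 L)}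
  choose L hL using fun i : converging => i.2
  obtain ⟨v, w, hv, hw⟩ := exists_lift_tendsto_of_forall_tendsto (fun i : converging => φ i) u hL
  have hconv (i) (hi : i ∈ converging) : Tendsto (fun k => φ i (u k)) U (𝓝 (φ i w)) :=
    (hw (φ i)).congr (hv ⟨i, hi⟩)
  -- `v` absorbs the convergent coordinates of `u`, so one `u k - v k` with `k` large serves as `q`.
  have hev (i) : ∀ᶠ k in U,
      (i ∈ converging → φ i (u k - v k) = 0) ∧
      (Tendsto (fun k => φ i (u k)) U atTop → 0 < φ i (u k - v k)) ∧
      (Tendsto (fun k => φ i (u k)) U atBot → φ i (u k - v k) < 0) := by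
    simp only [map_sub]
    rw [eventually_and, eventually_and]
    simp only [eventually_imp_distrib_left]
    refine ⟨fun hi => .of_forall fun k => sub_eq_zero.2 (hv ⟨i, hi⟩ k).symm, fun hi => ?_,
      fun hi => ?_⟩
    · exact (hi.atTop_add (hw (φ i)).neg).eventually_gt_atTop 0
    · exact (hi.atBot_add (hw (φ i)).neg).eventually_lt_atBot 0
  obtain ⟨k, hk⟩ := (eventually_all.2 hev).exists
  refine ⟨u k - v k, w, fun i => ?_⟩
  obtain ⟨hzero, hpos, hneg⟩ := hk i
  rcases ultrafilter_tendsto_nhds_or_atTop_or_atBot U (fun k => φ i (u k)) with hi | hi | hi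
  · exact ⟨fun _ => hconv i hi, fun h => (h.ne' (hzero hi)).elim, fun h => (h.ne (hzero hi)).elim⟩
  · exact ⟨fun h => ((hpos hi).ne' h).elim, fun _ => hi, fun h => ((hpos hi).asymm h).elim⟩
  · exact ⟨fun h => ((hneg hi).ne h).elim, fun h => ((hneg hi).asymm h).elim, fun _ => hi⟩

end UltrafilterLimits

section Monomials

variable {n : ℕ} {x y : Fin n → ℝ} {κ : Fin n →₀ ℕ}

theorem expVec_apply (κ : Fin n →₀ ℕ) (j : Fin n) : expVec κ j = κ j := rfl

@[simp] theorem expVec_zero : expVec (0 : Fin n →₀ ℕ) = 0 := by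
  ext j
  simp [expVec_apply]

@[simp] theorem expVec_single (j : Fin n) (a : ℕ) :
    expVec (Finsupp.single j a) = Pi.single j (a : ℝ) := by
  ext i
  simp [expVec_apply, Finsupp.single_apply, Pi.single_apply, eq_comm]

/-- The value at `x` of the monomial with exponent `κ`. -/
def mpow (x : Fin n → ℝ) (κ : Fin n →₀ ℕ) : ℝ := ∏ j, x j ^ κ j

theorem eval_eq_sum_mpow (x : Fin n → ℝ) (f : MvPolynomial (Fin n) ℝ) :
    eval x f = ∑ κ ∈ f.support, f.coeff κ * mpow x κ := eval_eq' x f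

@[simp] theorem mpow_zero (x : Fin n → ℝ) : mpow x 0 = 1 := by simp [mpow]

@[simp] theorem mpow_single_one (x : Fin n → ℝ) (j : Fin n) :
    mpow x (Finsupp.single j 1) = x j := by
  rw [mpow, Finset.prod_eq_single j] <;> simp +contextual [eq_comm]

theorem mpow_ne_zero_iff : mpow x κ ≠ 0 ↔ expVec κ ∈ RJ (Function.support x) := by
  simp only [mpow, Finset.prod_ne_zero_iff, Finset.mem_univ, true_imp_iff, RJ,
    expVec_apply, Function.notMem_support, mem_ofPred_eq, Nat.cast_eq_zero, Ne, pow_eq_zero_iff',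
    not_and_not_right]

theorem mpow_mul (x y : Fin n → ℝ) (κ : Fin n →₀ ℕ) :
    mpow (fun j => x j * y j) κ = mpow x κ * mpow y κ := by
  simp only [mpow, mul_pow, Finset.prod_mul_distrib]

theorem mpow_exp (a : Fin n → ℝ) (κ : Fin n →₀ ℕ) :
    mpow (fun j => Real.exp (a j)) κ = Real.exp (a ⬝ᵥ expVec κ) := by
  simp only [mpow, ← Real.exp_nat_mul, ← Real.exp_sum, dotProduct, expVec, mul_comm]

theorem sign_mpow (x : Fin n → ℝ) (κ : Fin n →₀ ℕ) :
    SignType.sign (mpow x κ) = ∏ j, SignType.sign (x j) ^ κ j := by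
  change signHom (∏ j, x j ^ κ j) = ∏ j, signHom (x j) ^ κ j
  simp only [map_prod, map_pow]

theorem sign_mpow_congr (h : ∀ j, SignType.sign (x j) = SignType.sign (y j)) (κ : Fin n →₀ ℕ) :
    SignType.sign (mpow x κ) = SignType.sign (mpow y κ) := by
  simp only [sign_mpow, h]

end Monomials

section FacePolynomials

variable {n : ℕ} {f : MvPolynomial (Fin n) ℝ} {J : Set (Fin n)}

theorem coeff_facePoly (f : MvPolynomial (Fin n) ℝ) (Δ : Set (Fin n → ℝ)) (κ : Fin n →₀ ℕ) :
    (facePoly f Δ).coeff κ = if expVec κ ∈ Δ then f.coeff κ else 0 := by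
  rw [facePoly, coeff_sum, Finset.sum_filter]
  simp only [coeff_monomial, ← ite_and, and_comm (a := expVec _ ∈ Δ)]
  rw [Finset.sum_eq_single κ]
  · simp
  · grind
  · grind [notMem_support_iff]

theorem support_facePoly (f : MvPolynomial (Fin n) ℝ) (Δ : Set (Fin n → ℝ)) :
    (facePoly f Δ).support = f.support.filter (expVec · ∈ Δ) := by
  ext κ
  simp [coeff_facePoly, and_comm]

theorem eval_facePoly (x : Fin n → ℝ) (f : MvPolynomial (Fin n) ℝ) (Δ : Set (Fin n → ℝ)) :
    eval x (facePoly f Δ) = ∑ κ ∈ f.support with expVec κ ∈ Δ, f.coeff κ * mpow x κ := by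
  rw [eval_eq_sum_mpow, support_facePoly]
  refine Finset.sum_congr rfl fun κ hκ => ?_
  rw [coeff_facePoly, if_pos (Finset.mem_filter.1 hκ).2]

theorem mpow_indicator (J : Set (Fin n)) (x : Fin n → ℝ) (κ : Fin n →₀ ℕ) :
    mpow (J.indicator x) κ = if expVec κ ∈ RJ J then mpow x κ else 0 := by
  split_ifs with hκ
  · refine Finset.prod_congr rfl fun j _ => ?_
    by_cases hj : j ∈ J
    · rw [indicator_of_mem hj]
    · have : κ j = 0 := by simpa [expVec_apply] using hκ j hj
      simp [this]
  · obtain ⟨j, hj, hκj⟩ : ∃ j ∉ J, κ j ≠ 0 := by simpa [RJ, expVec_apply] using hκ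
    exact Finset.prod_eq_zero (Finset.mem_univ j) <| by
      rw [indicator_of_notMem hj, zero_pow hκj]

theorem eval_facePoly_RJ (x : Fin n → ℝ) (f : MvPolynomial (Fin n) ℝ) (J : Set (Fin n)) :
    eval x (facePoly f (RJ J)) = eval (J.indicator x) f := by
  rw [eval_facePoly, eval_eq_sum_mpow, Finset.sum_filter]
  simp only [mpow_indicator, mul_ite, mul_zero]

theorem indicator_mem_RJ (J : Set (Fin n)) (x : Fin n → ℝ) : J.indicator x ∈ RJ J :=
  fun _ hj => indicator_of_notMem hj x

theorem indicator_eq_self_of_mem_RJ {x : Fin n → ℝ} (hx : x ∈ RJ J) : J.indicator x = x :=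
  indicator_eq_self.2 fun j hj => by_contra fun hJ => hj (hx j hJ)

theorem eval_eq_coeff_zero_of_mem_RJ {x : Fin n → ℝ} (hx : x ∈ RJ J)
    (hf : ∀ κ ∈ f.support, κ ≠ 0 → expVec κ ∉ RJ J) : eval x f = f.coeff 0 := by
  have hface : facePoly f (RJ J) = C (f.coeff 0) := by
    ext κ
    rw [coeff_facePoly, coeff_C]
    rcases eq_or_ne κ 0 with rfl | hκ
    · simp [RJ]
    · rw [if_neg hκ.symm, ite_eq_right_iff]
      exact fun hκJ => not_not.1 fun hκf => hf κ (mem_support_iff.2 hκf) hκ hκJ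
  rw [← indicator_eq_self_of_mem_RJ hx, ← eval_facePoly_RJ, hface, eval_C]

theorem notConstOn_iff :
    NotConstOn f J ↔ ∃ κ ∈ f.support, κ ≠ 0 ∧ expVec κ ∈ RJ J := by
  constructor
  · rintro ⟨x, hx, y, hy, hxy⟩
    by_contra! hf
    exact hxy <|
      (eval_eq_coeff_zero_of_mem_RJ hx hf).trans (eval_eq_coeff_zero_of_mem_RJ hy hf).symm
  · rintro ⟨κ, hκ, hκ0, hκJ⟩
    by_contra hf
    simp only [NotConstOn, not_exists, not_and, not_not] at hf
    have hface : facePoly f (RJ J) = C (eval 0 f) := MvPolynomial.funext fun x => by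
      rw [eval_facePoly_RJ, eval_C]
      exact hf _ (indicator_mem_RJ J x) 0 fun _ _ => rfl
    have := congr_arg (coeff κ) hface
    rw [coeff_facePoly, if_pos hκJ, coeff_C, if_neg hκ0.symm] at this
    exact mem_support_iff.1 hκ this

end FacePolynomials

theorem mem_convexHull_setOf_eq_of_forall_le {E : Type*} [AddCommGroup E] [Module ℝ E]
    {s : Set E} {φ : E →ₗ[ℝ] ℝ} {d : ℝ} (hs : ∀ z ∈ s, d ≤ φ z) {z : E}
    (hz : z ∈ convexHull ℝ s) (hzd : φ z = d) : z ∈ convexHull ℝ {y ∈ s | φ y = d} := by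
  let F := {y | d ≤ φ y ∧ (φ y = d → y ∈ convexHull ℝ {y ∈ s | φ y = d})}
  have hF : Convex ℝ F := by
    rw [convex_iff_forall_pos]
    rintro y ⟨hy, hyF⟩ z ⟨hz, hzF⟩ a b ha hb hab
    have hφ : φ (a • y + b • z) = d + a * (φ y - d) + b * (φ z - d) := by
      simp only [map_add, map_smul, smul_eq_mul]
      linear_combination d * hab
    have hay := mul_nonneg ha.le (sub_nonneg.2 hy)
    have hbz := mul_nonneg hb.le (sub_nonneg.2 hz)
    refine ⟨by rw [hφ]; linarith, fun hd => convex_convexHull ℝ _ (hyF ?_) (hzF ?_) ha.le hb.le hab⟩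
    · exact sub_eq_zero.1 ((mul_eq_zero_iff_left ha.ne').1 (by linarith))
    · exact sub_eq_zero.1 ((mul_eq_zero_iff_left hb.ne').1 (by linarith))
  have hsF : s ⊆ F := fun y hy => ⟨hs y hy, fun hyd => subset_convexHull ℝ _ ⟨hy, hyd⟩⟩
  exact (convexHull_min hsF hF hz).2 hzd

section NewtonPolyhedra

variable {n : ℕ} {f : MvPolynomial (Fin n) ℝ} {q z : Fin n → ℝ} {κ : Fin n →₀ ℕ}

theorem expVec_mem_newtonPolyhedron (hκ : κ ∈ f.support) : expVec κ ∈ NewtonPolyhedron f :=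
  subset_convexHull ℝ _ (mem_image_of_mem expVec hκ)

theorem isCompact_newtonPolyhedron (f : MvPolynomial (Fin n) ℝ) :
    IsCompact (NewtonPolyhedron f) :=
  (f.support.finite_toSet.image expVec).isCompact_convexHull ℝ

theorem newtonD_le (q : Fin n → ℝ) (hz : z ∈ NewtonPolyhedron f) : NewtonD f q ≤ q ⬝ᵥ z :=
  csInf_le ((isCompact_newtonPolyhedron f).bddBelow_image (by fun_prop)) (mem_image_of_mem _ hz)

theorem expVec_mem_newtonFace_iff (hκ : κ ∈ f.support) :
    expVec κ ∈ NewtonFace f q ↔ q ⬝ᵥ expVec κ = NewtonD f q :=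
  and_iff_right (expVec_mem_newtonPolyhedron hκ)

theorem convex_RJ (J : Set (Fin n)) : Convex ℝ (RJ J) := by
  intro y hy z hz a b _ _ _ j hj
  simp [hy j hj, hz j hj]

theorem newtonFace_subset_RJ {J : Set (Fin n)}
    (h : ∀ κ ∈ f.support, q ⬝ᵥ expVec κ = NewtonD f q → expVec κ ∈ RJ J) :
    NewtonFace f q ⊆ RJ J := by
  rintro z ⟨hz, hzq⟩
  refine convexHull_min ?_ (convex_RJ J) <| mem_convexHull_setOf_eq_of_forall_le
    (φ := dotProductBilin ℝ ℝ q) (fun y hy => newtonD_le q (subset_convexHull ℝ _ hy)) hz hzq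
  rintro _ ⟨⟨κ, hκ, rfl⟩, hκq⟩
  exact h κ hκ hκq

theorem notConstOn_of_mem_newtonPolyhedron {J : Set (Fin n)} (hz : z ∈ NewtonPolyhedron f)
    (hzJ : z ∈ RJ J) (hz0 : z ≠ 0) : NotConstOn f J := by
  rw [notConstOn_iff]
  by_contra! hf
  let φ := dotProductBilin ℝ ℝ (Jᶜ.indicator (1 : Fin n → ℝ))
  have hφ (y : Fin n → ℝ) : φ y = ∑ j, Jᶜ.indicator y j := by
    simp [φ, dotProduct, indicator_apply]
  have hφz : φ z = 0 := by
    rw [hφ]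
    exact Finset.sum_eq_zero fun j _ => indicator_apply_eq_zero.2 (hzJ j)
  have hnonneg (κ : Fin n →₀ ℕ) (j : Fin n) : 0 ≤ Jᶜ.indicator (expVec κ) j :=
    indicator_nonneg (fun i _ => Nat.cast_nonneg (κ i)) j
  have hface : {y ∈ expVec '' f.support | φ y = 0} ⊆ {0} := by
    rintro _ ⟨⟨κ, hκ, rfl⟩, hκφ⟩
    rw [hφ, Finset.sum_eq_zero_iff_of_nonneg fun j _ => hnonneg κ j] at hκφ
    have hκ0 : κ = 0 := not_not.1 fun hκ0 => hf κ hκ hκ0 fun j hj =>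
      indicator_apply_eq_zero.1 (hκφ j (Finset.mem_univ j)) hj
    ext j
    simp [hκ0, expVec_apply]
  refine hz0 <| convexHull_min hface (convex_singleton 0) <|
    mem_convexHull_setOf_eq_of_forall_le ?_ hz hφz
  rintro _ ⟨κ, -, rfl⟩
  exact hφ (expVec κ) ▸ Finset.sum_nonneg fun j _ => hnonneg κ j

theorem Convenient.notConstOn (hf : Convenient f) {J : Set (Fin n)} (hJ : J.Nonempty) :
    NotConstOn f J := by
  obtain ⟨j, hj⟩ := hJ
  obtain ⟨c, hc, hcf⟩ := hf j
  refine notConstOn_of_mem_newtonPolyhedron hcf (fun i hi => ?_) (by simpa using hc.ne')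
  simp [ne_of_mem_of_not_mem hj hi]

theorem Convenient.newtonD_neg (hf : Convenient f) {j : Fin n} (hq : q j < 0) :
    NewtonD f q < 0 := by
  obtain ⟨c, hc, hcf⟩ := hf j
  refine (newtonD_le q hcf).trans_lt ?_
  simpa using mul_neg_of_pos_of_neg hc hq

end NewtonPolyhedra

section EulerDerivatives

variable {n : ℕ}

/-- The logarithmic derivative `∑ j, g j * x j * ∂f/∂x j` of `f` in the direction `g`: the vector
field generating the flow `x ↦ (exp (t * g j) * x j)` applied to `f`. -/
def eulerDeriv (g : Fin n → ℝ) (f : MvPolynomial (Fin n) ℝ) : MvPolynomial (Fin n) ℝ :=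
  ∑ j, C (g j) * (X j * pderiv j f)

theorem eval_eulerDeriv (x g : Fin n → ℝ) (f : MvPolynomial (Fin n) ℝ) :
    eval x (eulerDeriv g f) = ∑ j, g j * (x j * eval x (pderiv j f)) := by
  simp [eulerDeriv]

theorem eval_eulerDeriv_add_smul (x g q : Fin n → ℝ) (t : ℝ) (f : MvPolynomial (Fin n) ℝ) :
    eval x (eulerDeriv (g + t • q) f) = eval x (eulerDeriv g f) + t * eval x (eulerDeriv q f) := by
  simp [eval_eulerDeriv, add_mul, Finset.sum_add_distrib, Finset.mul_sum, mul_assoc]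

theorem coeff_X_mul_pderiv {σ R : Type*} [CommSemiring R] (f : MvPolynomial σ R) (j : σ)
    (κ : σ →₀ ℕ) : coeff κ (X j * pderiv j f) = κ j * f.coeff κ := by
  induction f using MvPolynomial.induction_on' with
  | monomial m r =>
    rw [X_mul_pderiv_monomial, coeff_smul, coeff_monomial, nsmul_eq_mul]
    split_ifs with h <;> simp [h]
  | add f g hf hg => rw [map_add, mul_add, coeff_add, hf, hg, coeff_add, mul_add]

theorem coeff_eulerDeriv (g : Fin n → ℝ) (f : MvPolynomial (Fin n) ℝ) (κ : Fin n →₀ ℕ) :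
    (eulerDeriv g f).coeff κ = (g ⬝ᵥ expVec κ) * f.coeff κ := by
  simp only [eulerDeriv, coeff_sum, coeff_C_mul, coeff_X_mul_pderiv, dotProduct, expVec_apply,
    Finset.sum_mul, mul_assoc]

theorem support_eulerDeriv_subset (g : Fin n → ℝ) (f : MvPolynomial (Fin n) ℝ) :
    (eulerDeriv g f).support ⊆ f.support := fun κ hκ => by
  rw [mem_support_iff, coeff_eulerDeriv] at hκ
  exact mem_support_iff.2 (right_ne_zero_of_mul hκ)

theorem eulerDeriv_facePoly (g : Fin n → ℝ) (f : MvPolynomial (Fin n) ℝ) (Δ : Set (Fin n → ℝ)) :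
    eulerDeriv g (facePoly f Δ) = facePoly (eulerDeriv g f) Δ := by
  ext κ
  simp only [coeff_eulerDeriv, coeff_facePoly, mul_ite, mul_zero]

theorem eulerDeriv_facePoly_newtonFace (q : Fin n → ℝ) (f : MvPolynomial (Fin n) ℝ) :
    eulerDeriv q (facePoly f (NewtonFace f q)) =
      C (NewtonD f q) * facePoly f (NewtonFace f q) := by
  ext κ
  rw [coeff_eulerDeriv, coeff_C_mul, coeff_facePoly]
  split_ifs with hκ
  · rw [show q ⬝ᵥ expVec κ = NewtonD f q from hκ.2]
  · simp only [mul_zero]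

end EulerDerivatives

section ToricAsymptotics

variable {n : ℕ} {ι : Type*} {T : Finset (Fin n →₀ ℕ)}

/-- A family `x` of points behaves along `l` like the monomial curve `t ↦ (t ^ q j * ξ j)` as
`t → 0⁺`, as far as signs and quotients of monomials with exponents in `T` can tell. It plays the
role that the curve selection lemma has in the semialgebraic setting. -/
structure IsToricAsymptotic (l : Filter ι) (x : ι → Fin n → ℝ) (T : Finset (Fin n →₀ ℕ))
    (q ξ : Fin n → ℝ) : Prop where
  eventually_sign_eq : ∀ᶠ k in l, ∀ j, SignType.sign (x k j) = SignType.sign (ξ j)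
  lt_of_mpow_eq_zero : ∀ κ ∈ T, ∀ κ' ∈ T, mpow ξ κ = 0 → mpow ξ κ' ≠ 0 →
    q ⬝ᵥ expVec κ' < q ⬝ᵥ expVec κ
  tendsto_div_of_eq : ∀ κ ∈ T, ∀ κ' ∈ T, mpow ξ κ' ≠ 0 → q ⬝ᵥ expVec κ = q ⬝ᵥ expVec κ' →
    Tendsto (fun k => mpow (x k) κ / mpow (x k) κ') l (𝓝 (mpow ξ κ / mpow ξ κ'))
  tendsto_div_of_lt : ∀ κ ∈ T, ∀ κ' ∈ T, mpow ξ κ' ≠ 0 → q ⬝ᵥ expVec κ' < q ⬝ᵥ expVec κ →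
    Tendsto (fun k => mpow (x k) κ / mpow (x k) κ') l (𝓝 0)

theorem exists_dotProduct_expVec_lt (T : Finset (Fin n →₀ ℕ)) (J : Set (Fin n))
    (q : Fin n → ℝ) :
    ∃ q' : Fin n → ℝ, (∀ z ∈ RJ J, q' ⬝ᵥ z = q ⬝ᵥ z) ∧
      ∀ κ ∈ T, ∀ κ' ∈ T, expVec κ ∉ RJ J → expVec κ' ∈ RJ J →
        q' ⬝ᵥ expVec κ' < q' ⬝ᵥ expVec κ := by
  let e : Fin n → ℝ := Jᶜ.indicator 1
  have he (z : Fin n → ℝ) (hz : z ∈ RJ J) : e ⬝ᵥ z = 0 :=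
    Finset.sum_eq_zero fun j _ => by
      by_cases hj : j ∈ J
      · simp [e, hj]
      · simp [hz j hj]
  have hpos (κ : Fin n →₀ ℕ) (hκ : expVec κ ∉ RJ J) : 0 < e ⬝ᵥ expVec κ := by
    obtain ⟨j, hj, hκj⟩ : ∃ j ∉ J, κ j ≠ 0 := by simpa [RJ, expVec_apply] using hκ
    refine Finset.sum_pos' (fun i _ => mul_nonneg ?_ (Nat.cast_nonneg _)) ⟨j, Finset.mem_univ j, ?_⟩
    · exact indicator_nonneg (fun _ _ => zero_le_one) i
    · simpa [e, hj, expVec_apply] using Nat.pos_of_ne_zero hκj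
  have hev : ∀ᶠ R : ℝ in atTop, ∀ κ ∈ T, ∀ κ' ∈ T, expVec κ ∉ RJ J →
      q ⬝ᵥ expVec κ' < q ⬝ᵥ expVec κ + R * e ⬝ᵥ expVec κ := by
    simp only [Finset.eventually_all, eventually_imp_distrib_left]
    intro κ _ κ' _ hκ
    exact (tendsto_atTop_add_const_left _ _
      (tendsto_id.atTop_mul_const (hpos κ hκ))).eventually_gt_atTop _
  obtain ⟨R, hR⟩ := hev.exists
  refine ⟨q + R • e, fun z hz => by simp [add_dotProduct, he z hz], fun κ hκ κ' hκ' hκJ hκ'J => ?_⟩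
  simpa [add_dotProduct, he _ hκ'J] using hR κ hκ κ' hκ' hκJ

theorem sign_mul_exp_log (a : ℝ) : SignType.sign a * Real.exp (Real.log a) = a := by
  rcases eq_or_ne a 0 with rfl | ha
  · simp
  · rw [Real.exp_log_eq_abs ha, sign_mul_abs]

theorem mpow_mul_exp_div (s u : Fin n → ℝ) (κ κ' : Fin n →₀ ℕ) :
    mpow (fun j => s j * Real.exp (u j)) κ / mpow (fun j => s j * Real.exp (u j)) κ' =
      mpow s κ / mpow s κ' * Real.exp ((expVec κ - expVec κ') ⬝ᵥ u) := by
  rw [mpow_mul, mpow_mul, mpow_exp, mpow_exp, mul_div_mul_comm, ← Real.exp_sub, sub_dotProduct,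
    dotProduct_comm u, dotProduct_comm u]

theorem sign_coe_signType_mul_exp (σ : SignType) (a : ℝ) :
    SignType.sign ((σ : ℝ) * Real.exp a) = σ := by
  rw [sign_mul, sign_pos (Real.exp_pos a), mul_one]
  cases σ <;> simp

theorem exists_tendsto_dotProduct_expVec_sub (U : Ultrafilter ι) (u : ι → Fin n → ℝ)
    (T : Finset (Fin n →₀ ℕ)) (J : Set (Fin n)) :
    ∃ q w : Fin n → ℝ, ∀ κ ∈ T, ∀ κ' ∈ T, expVec κ' ∈ RJ J →
      (expVec κ ∉ RJ J → q ⬝ᵥ expVec κ' < q ⬝ᵥ expVec κ) ∧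
      (expVec κ ∈ RJ J →
        (q ⬝ᵥ expVec κ = q ⬝ᵥ expVec κ' →
          Tendsto (fun k => (expVec κ - expVec κ') ⬝ᵥ u k) U (𝓝 ((expVec κ - expVec κ') ⬝ᵥ w))) ∧
        (q ⬝ᵥ expVec κ' < q ⬝ᵥ expVec κ →
          Tendsto (fun k => (expVec κ - expVec κ') ⬝ᵥ u k) U atBot)) := by
  obtain ⟨r, w, hrw⟩ := exists_forall_tendsto_ultrafilter U
    (fun κ : T × T => dotProductBilin (A := ℝ) ℝ ℝ (expVec κ.1 - expVec κ.2)) u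
  obtain ⟨q, hqr, hq⟩ := exists_dotProduct_expVec_lt T J (-r)
  refine ⟨q, w, fun κ hκ κ' hκ' hκ'J => ⟨fun hκJ => hq κ hκ κ' hκ' hκJ hκ'J, fun hκJ => ?_⟩⟩
  have hdiff : (expVec κ - expVec κ') ⬝ᵥ r = q ⬝ᵥ expVec κ' - q ⬝ᵥ expVec κ := by
    rw [hqr _ hκJ, hqr _ hκ'J, sub_dotProduct, neg_dotProduct, neg_dotProduct, dotProduct_comm r,
      dotProduct_comm r]
    ring
  obtain ⟨hzero, -, hneg⟩ := hrw (⟨κ, hκ⟩, ⟨κ', hκ'⟩)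
  exact ⟨fun h => hzero (hdiff.trans (by rw [h, sub_self])),
    fun h => hneg (hdiff.trans_lt (sub_neg.2 h))⟩

theorem exists_isToricAsymptotic (U : Ultrafilter ι) (x : ι → Fin n → ℝ)
    (T : Finset (Fin n →₀ ℕ)) : ∃ q ξ, IsToricAsymptotic U x T q ξ := by
  let u (k : ι) (j : Fin n) : ℝ := Real.log (x k j)
  obtain ⟨σ, hσ⟩ : ∃ σ : Fin n → SignType, ∀ᶠ k in U, ∀ j, SignType.sign (x k j) = σ j :=
    U.eventually_exists_iff.1 (.of_forall fun k => ⟨_, fun _ => rfl⟩)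
  let s (j : Fin n) : ℝ := σ j
  obtain ⟨q, w, hqw⟩ := exists_tendsto_dotProduct_expVec_sub U u T (Function.support s)
  let ξ (j : Fin n) : ℝ := s j * Real.exp (w j)
  have hξ (κ : Fin n →₀ ℕ) : mpow ξ κ = 0 ↔ mpow s κ = 0 := by
    rw [mpow_mul, mpow_exp, mul_eq_zero_iff_right (Real.exp_ne_zero _)]
  have hx (κ κ') : (fun k => mpow s κ / mpow s κ' * Real.exp ((expVec κ - expVec κ') ⬝ᵥ u k)) =ᶠ[U]
      fun k => mpow (x k) κ / mpow (x k) κ' := by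
    filter_upwards [hσ] with k hk
    rw [← mpow_mul_exp_div]
    simp only [s, u, ← hk, sign_mul_exp_log]
  refine ⟨q, ξ, ?_, fun κ hκT κ' hκ'T hκ hκ' => ?_, fun κ hκT κ' hκ'T hκ' hqκ => ?_,
    fun κ hκT κ' hκ'T hκ' hqκ => ?_⟩
  · filter_upwards [hσ] with k hk j
    rw [hk j, sign_coe_signType_mul_exp]
  · rw [hξ] at hκ
    rw [Ne, hξ, ← Ne, mpow_ne_zero_iff] at hκ'
    exact (hqw κ hκT κ' hκ'T hκ').1 fun h => mpow_ne_zero_iff.2 h hκ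
  all_goals
    rw [Ne, hξ, ← Ne, mpow_ne_zero_iff] at hκ'
    refine Tendsto.congr' (hx κ κ') ?_
    rcases eq_or_ne (mpow s κ) 0 with hκ | hκ
  · simp [hκ, (hξ κ).2 hκ]
  · rw [mpow_mul_exp_div]
    exact ((Real.continuous_exp.tendsto _).comp <|
      ((hqw κ hκT κ' hκ'T hκ').2 (mpow_ne_zero_iff.1 hκ)).1 hqκ).const_mul _
  · simp [hκ]
  · rw [← mul_zero (mpow s κ / mpow s κ')]
    exact (Real.tendsto_exp_atBot.comp <|
      ((hqw κ hκT κ' hκ'T hκ').2 (mpow_ne_zero_iff.1 hκ)).2 hqκ).const_mul _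

end ToricAsymptotics

theorem exists_abs_apply_eq_norm {κ : Type*} [Fintype κ] {x : κ → ℝ} (hx : x ≠ 0) :
    ∃ i, |x i| = ‖x‖ := by
  obtain ⟨j, -⟩ := Function.ne_iff.1 hx
  have : Nonempty κ := ⟨j⟩
  obtain ⟨i, hi⟩ := Finite.exists_max fun i => |x i|
  exact ⟨i, le_antisymm (norm_le_pi_norm x i) ((pi_norm_le_iff_of_nonneg (abs_nonneg _)).2 hi)⟩

namespace IsToricAsymptotic

variable {n : ℕ} {ι : Type*} {l : Filter ι} {x : ι → Fin n → ℝ} {T : Finset (Fin n →₀ ℕ)}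
  {q ξ : Fin n → ℝ} {f F : MvPolynomial (Fin n) ℝ} {κ m : Fin n →₀ ℕ} {j : Fin n}

theorem eventually_support_eq (h : IsToricAsymptotic l x T q ξ) :
    ∀ᶠ k in l, Function.support (x k) = Function.support ξ :=
  h.eventually_sign_eq.mono fun k hk => by
    ext j
    rw [Function.mem_support, Function.mem_support, ← sign_ne_zero, hk, sign_ne_zero]

theorem mpow_ne_zero_of_dotProduct_le (h : IsToricAsymptotic l x T q ξ) (hκ : κ ∈ T) (hm : m ∈ T)
    (hξκ : mpow ξ κ ≠ 0) (hmκ : q ⬝ᵥ expVec m ≤ q ⬝ᵥ expVec κ) : mpow ξ m ≠ 0 :=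
  fun hξm => (h.lt_of_mpow_eq_zero m hm κ hκ hξm hξκ).not_ge hmκ

theorem newtonFace_subset_RJ (h : IsToricAsymptotic l x T q ξ) (hf : f.support ⊆ T)
    (hfξ : NotConstOn f (Function.support ξ)) : NewtonFace f q ⊆ RJ (Function.support ξ) := by
  obtain ⟨κ, hκ, -, hκξ⟩ := notConstOn_iff.1 hfξ
  refine _root_.newtonFace_subset_RJ fun m hm hmq => mpow_ne_zero_iff.1 ?_
  exact h.mpow_ne_zero_of_dotProduct_le (hf hκ) (hf hm) (mpow_ne_zero_iff.2 hκξ)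
    (hmq.trans_le (newtonD_le q (expVec_mem_newtonPolyhedron hκ)))

theorem tendsto_eval_div (h : IsToricAsymptotic l x T q ξ) (hm : m ∈ T) (hξm : mpow ξ m ≠ 0)
    (hFT : F.support ⊆ T) (hF : ∀ κ ∈ F.support, q ⬝ᵥ expVec m ≤ q ⬝ᵥ expVec κ) :
    Tendsto (fun k => eval (x k) F / mpow (x k) m) l
      (𝓝 (eval ξ (facePoly F {z | q ⬝ᵥ z = q ⬝ᵥ expVec m}) / mpow ξ m)) := by
  rw [eval_facePoly, Finset.sum_filter, Finset.sum_div]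
  simp only [eval_eq_sum_mpow, Finset.sum_div, mul_div_assoc]
  refine tendsto_finsetSum _ fun κ hκ => ?_
  split_ifs with hκm
  · rw [mul_div_assoc]
    exact (h.tendsto_div_of_eq κ (hFT hκ) m hm hξm hκm).const_mul _
  · rw [zero_div, ← mul_zero (F.coeff κ)]
    exact (h.tendsto_div_of_lt κ (hFT hκ) m hm hξm ((hF κ hκ).lt_of_ne' hκm)).const_mul _

theorem exists_tendsto_eval_div (h : IsToricAsymptotic l x T q ξ) (hf : f.support ⊆ T)
    (hF : F.support ⊆ f.support) (hFξ : eval ξ (facePoly F (NewtonFace f q)) ≠ 0) :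
    ∃ m ∈ T, mpow ξ m ≠ 0 ∧ q ⬝ᵥ expVec m = NewtonD f q ∧
      Tendsto (fun k => eval (x k) F / mpow (x k) m) l
        (𝓝 (eval ξ (facePoly F (NewtonFace f q)) / mpow ξ m)) := by
  obtain ⟨m, hm, hξm⟩ := Finset.exists_ne_zero_of_sum_ne_zero (eval_facePoly ξ F _ ▸ hFξ)
  obtain ⟨hmF, hmq⟩ := Finset.mem_filter.1 hm
  rw [expVec_mem_newtonFace_iff (hF hmF)] at hmq
  have hface : facePoly F (NewtonFace f q) = facePoly F {z | q ⬝ᵥ z = q ⬝ᵥ expVec m} := by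
    unfold facePoly
    congr 1
    exact Finset.filter_congr fun κ hκ => by rw [expVec_mem_newtonFace_iff (hF hκ), mem_ofPred, hmq]
  refine ⟨m, hf (hF hmF), right_ne_zero_of_mul hξm, hmq, hface ▸ h.tendsto_eval_div (hf (hF hmF))
    (right_ne_zero_of_mul hξm) (hF.trans hf) fun κ hκ => ?_⟩
  exact hmq.trans_le (newtonD_le q (expVec_mem_newtonPolyhedron (hF hκ)))

theorem eventually_sign_eval_eq (h : IsToricAsymptotic l x T q ξ) (hf : f.support ⊆ T)
    (hF : F.support ⊆ f.support) (hFξ : eval ξ (facePoly F (NewtonFace f q)) ≠ 0) :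
    ∀ᶠ k in l, SignType.sign (eval (x k) F) =
      SignType.sign (eval ξ (facePoly F (NewtonFace f q))) := by
  obtain ⟨m, -, hξm, -, hlim⟩ := h.exists_tendsto_eval_div hf hF hFξ
  have hsign := (continuousAt_sign_of_ne_zero (div_ne_zero hFξ hξm)).tendsto.comp hlim
  rw [nhds_discrete, tendsto_pure] at hsign
  filter_upwards [hsign, h.eventually_sign_eq] with k hk hxk
  have hm := sign_mpow_congr hxk m
  have hxm : mpow (x k) m ≠ 0 := by rwa [← sign_ne_zero, hm, sign_ne_zero]
  rw [← div_mul_cancel₀ (eval (x k) F) hxm, sign_mul, hm]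
  rw [← div_mul_cancel₀ (eval ξ _) hξm, sign_mul, ← hk, Function.comp]

theorem eventually_eval_neg (h : IsToricAsymptotic l x T q ξ) (hf : f.support ⊆ T)
    (hF : F.support ⊆ f.support) (hFξ : eval ξ (facePoly F (NewtonFace f q)) < 0) :
    ∀ᶠ k in l, eval (x k) F < 0 :=
  (h.eventually_sign_eval_eq hf hF hFξ.ne).mono fun k hk => by
    rwa [← sign_eq_neg_one_iff, hk, sign_eq_neg_one_iff]

theorem eval_facePoly_nonpos [NeBot l] (h : IsToricAsymptotic l x T q ξ) (hf : f.support ⊆ T)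
    (hxf : ∀ᶠ k in l, eval (x k) f ≤ 0) : eval ξ (facePoly f (NewtonFace f q)) ≤ 0 := by
  by_contra! hpos
  obtain ⟨k, hk, hsign⟩ := (hxf.and (h.eventually_sign_eval_eq hf subset_rfl hpos.ne')).exists
  rw [sign_pos hpos, sign_eq_one_iff] at hsign
  exact hk.not_gt hsign

theorem eval_facePoly_eq_zero_of_bounded [NeBot l] (h : IsToricAsymptotic l x T q ξ)
    (hf : f.support ⊆ T) (h0 : 0 ∈ T) (hq : NewtonD f q < 0) {b B : ℝ}
    (hb : ∀ᶠ k in l, b ≤ eval (x k) f) (hB : ∀ᶠ k in l, eval (x k) f ≤ B) :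
    eval ξ (facePoly f (NewtonFace f q)) = 0 := by
  by_contra hfξ
  obtain ⟨m, hm, hξm, hmq, hlim⟩ := h.exists_tendsto_eval_div hf subset_rfl hfξ
  have hinv := h.tendsto_div_of_lt 0 h0 m hm hξm (by simpa [hmq])
  refine div_ne_zero hfξ hξm (tendsto_nhds_unique hlim ?_)
  simpa [div_eq_mul_inv] using bdd_le_mul_tendsto_zero hb hB hinv

theorem tendsto_apply_of_nonneg (h : IsToricAsymptotic l x T q ξ) (h0 : 0 ∈ T)
    (hj : Finsupp.single j 1 ∈ T) (hq : 0 ≤ q j) : ∃ L, Tendsto (fun k => x k j) l (𝓝 L) := by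
  rcases hq.eq_or_lt with hq | hq
  · exact ⟨ξ j, by simpa using h.tendsto_div_of_eq _ hj 0 h0 (by simp) (by simp [← hq])⟩
  · exact ⟨0, by simpa using h.tendsto_div_of_lt _ hj 0 h0 (by simp) (by simpa)⟩

theorem eventually_abs_apply_lt {i : Fin n} (h : IsToricAsymptotic l x T q ξ)
    (hi : Finsupp.single i 1 ∈ T) (hj : Finsupp.single j 1 ∈ T) (hξ : ξ i ≠ 0) (hq : q i < q j) :
    ∀ᶠ k in l, |x k j| < |x k i| := by
  have hlim := h.tendsto_div_of_lt _ hj _ hi (by simpa) (by simpa)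
  filter_upwards [h.eventually_sign_eq, hlim.abs.eventually_lt_const (abs_zero.trans_lt one_pos)]
    with k hk hlt
  have hx : x k i ≠ 0 := by rwa [← sign_ne_zero, hk, sign_ne_zero]
  rwa [mpow_single_one, mpow_single_one, abs_div, div_lt_one (abs_pos.2 hx)] at hlt

theorem exists_dominant_coordinate {U : Ultrafilter ι} (h : IsToricAsymptotic U x T q ξ)
    (h0 : 0 ∈ T) (hT : ∀ j, Finsupp.single j 1 ∈ T) (hx : Tendsto (fun k => ‖x k‖) U atTop) :
    ∃ i, ξ i ≠ 0 ∧ q i < 0 ∧ ∀ j, q j = q i ∨ ∀ᶠ k in U, |x k j| < ‖x k‖ := by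
  obtain ⟨i, hi⟩ : ∃ i, ∀ᶠ k in U, |x k i| = ‖x k‖ := by
    refine U.eventually_exists_iff.1 ?_
    filter_upwards [hx.eventually_gt_atTop 0] with k hk
    exact exists_abs_apply_eq_norm (norm_pos_iff.1 hk)
  have hξ : ξ i ≠ 0 := by
    obtain ⟨k, hk, hpos, hsign⟩ :=
      (hi.and ((hx.eventually_gt_atTop 0).and h.eventually_sign_eq)).exists
    rwa [← sign_ne_zero, ← hsign, sign_ne_zero, ← abs_pos, hk]
  refine ⟨i, hξ, not_le.1 fun hq => ?_, fun j => ?_⟩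
  · obtain ⟨L, hL⟩ := h.tendsto_apply_of_nonneg h0 (hT i) hq
    exact not_tendsto_nhds_of_tendsto_atTop (hx.congr' (hi.mono fun k hk => hk.symm)) _ hL.abs
  · rcases lt_trichotomy (q i) (q j) with hq | hq | hq
    · right
      filter_upwards [hi, h.eventually_abs_apply_lt (hT i) (hT j) hξ hq] with k hk hlt
      exact hk ▸ hlt
    · exact .inl hq.symm
    · have hξj : ξ j ≠ 0 := by
        simpa using h.mpow_ne_zero_of_dotProduct_le (hT i) (hT j) (by simpa) (by simpa using hq.le)
      obtain ⟨k, hk, hlt⟩ := (hi.and (h.eventually_abs_apply_lt (hT j) (hT i) hξj hq)).exists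
      exact absurd (hk ▸ hlt) (norm_le_pi_norm (x k) j).not_gt

end IsToricAsymptotic

section Descent

theorem hasDerivAt_eval_add_smul {𝕜 σ : Type*} [NontriviallyNormedField 𝕜] [Fintype σ]
    (f : MvPolynomial σ 𝕜) (x h : σ → 𝕜) (t : 𝕜) :
    HasDerivAt (fun s : 𝕜 => eval (x + s • h) f)
      (∑ j, h j * eval (x + t • h) (pderiv j f)) t := by
  induction f using MvPolynomial.induction_on with
  | C a => simpa using hasDerivAt_const t a
  | add f g hf hg =>
    simp only [map_add, mul_add, Finset.sum_add_distrib]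
    exact hf.add hg
  | mul_X f i hf =>
    have hX : HasDerivAt (fun s : 𝕜 => x i + s * h i) (h i) t := by
      simpa using ((hasDerivAt_id t).mul_const (h i)).const_add (x i)
    convert! hf.mul hX using 1
    · ext s
      simp
    · have hj (j : σ) : eval (x + t • h) (pderiv j (f * X i)) =
          eval (x + t • h) (pderiv j f) * (x i + t * h i) +
            if i = j then eval (x + t • h) f else 0 := by
        rw [pderiv_mul, pderiv_X, Pi.single_apply]
        split_ifs <;> simp
      simp only [hj, mul_add, Finset.sum_add_distrib, Finset.sum_mul, mul_ite, mul_zero,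
        Finset.sum_ite_eq, Finset.mem_univ, if_true, mul_assoc, mul_comm (h i)]

variable {n p : ℕ} {f : MvPolynomial (Fin n) ℝ} {x g : Fin n → ℝ}

theorem eventually_eval_add_smul_lt_of_eulerDeriv_neg (hf : eval x (eulerDeriv g f) < 0) :
    ∀ᶠ ε : ℝ in 𝓝[>] 0, eval (x + ε • (g * x)) f < eval x f := by
  have hderiv := hasDerivAt_eval_add_smul f x (g * x) 0
  simp only [zero_smul, add_zero, Pi.mul_apply, mul_assoc, ← eval_eulerDeriv] at hderiv
  filter_upwards [hderiv.tendsto_slope_zero_right.eventually_lt_const hf, self_mem_nhdsWithin]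
    with ε hε hpos
  simp only [zero_add, zero_smul, add_zero, smul_eq_mul] at hε
  exact sub_neg.1 ((pos_iff_neg_of_mul_neg hε).1 (inv_pos.2 hpos))

theorem eventually_eval_add_smul_neg (h : Fin n → ℝ) (hf : eval x f < 0) :
    ∀ᶠ ε : ℝ in 𝓝[>] 0, eval (x + ε • h) f < 0 := by
  have hcont : Continuous fun ε : ℝ => eval (x + ε • h) f :=
    f.continuous_eval.comp (by fun_prop)
  refine eventually_nhdsWithin_of_eventually_nhds (hcont.tendsto 0 |>.eventually_lt_const ?_)
  simpa using hf

theorem eval_add_smul_eq_of_not_notConstOn {J : Set (Fin n)} (hf : ¬ NotConstOn f J)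
    (hx : x ∈ RJ J) (ε : ℝ) : eval (x + ε • (g * x)) f = eval x f := by
  by_contra hne
  exact hf ⟨_, fun j hj => by simp [hx j hj], x, hx, hne⟩

theorem eventually_norm_add_smul_mul_le (h : ∀ j, g j < 0 ∨ |x j| < ‖x‖) :
    ∀ᶠ ε : ℝ in 𝓝[>] 0, ‖x + ε • (g * x)‖ ≤ ‖x‖ := by
  simp only [pi_norm_le_iff_of_nonneg (norm_nonneg x)]
  refine eventually_all.2 fun j => ?_
  have hcont : Tendsto (fun ε : ℝ => 1 + ε * g j) (𝓝 0) (𝓝 1) :=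
    (by fun_prop : Continuous fun ε : ℝ => 1 + ε * g j).tendsto' 0 1 (by simp)
  have hfactor (ε : ℝ) : ‖(x + ε • (g * x)) j‖ = |1 + ε * g j| * |x j| := by
    rw [← abs_mul, Real.norm_eq_abs]
    congr 1
    simp only [Pi.add_apply, Pi.smul_apply, Pi.mul_apply, smul_eq_mul]
    ring
  simp only [hfactor]
  rcases h j with hg | hx
  · filter_upwards [self_mem_nhdsWithin, eventually_nhdsWithin_of_eventually_nhds
      (hcont.eventually_const_lt one_pos)] with ε hε hpos
    refine (mul_le_of_le_one_left (abs_nonneg _) ?_).trans (norm_le_pi_norm x j)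
    rw [abs_of_pos hpos]
    linarith [mul_neg_of_pos_of_neg hε hg]
  · have := (hcont.abs.mul_const |x j|).eventually_le_const (u := ‖x‖) (by simpa using hx)
    exact eventually_nhdsWithin_of_eventually_nhds this

/-- The feasible set `{x | f i x ≤ 0 for all i ≠ 0}` of the problem with objective `f 0`. -/
def feasibleSet (f : Fin (p + 1) → MvPolynomial (Fin n) ℝ) : Set (Fin n → ℝ) :=
  {x | ∀ i, i ≠ 0 → eval x (f i) ≤ 0}

theorem isClosed_feasibleSet (f : Fin (p + 1) → MvPolynomial (Fin n) ℝ) :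
    IsClosed (feasibleSet f) := by
  simp only [feasibleSet, ofPred_forall]
  exact isClosed_iInter fun i => isClosed_iInter fun _ =>
    isClosed_le (f i).continuous_eval continuous_const

theorem not_isMinOn_of_eulerDeriv_neg {f : Fin (p + 1) → MvPolynomial (Fin n) ℝ}
    (hx : x ∈ feasibleSet f) (h0 : eval x (eulerDeriv g (f 0)) < 0)
    (hf : ∀ i ≠ 0, eval x (f i) < 0 ∨ eval x (eulerDeriv g (f i)) < 0 ∨
      ¬ NotConstOn (f i) (Function.support x))
    (hnorm : ∀ j, g j < 0 ∨ |x j| < ‖x‖) :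
    ¬ IsMinOn (eval · (f 0)) (feasibleSet f ∩ Metric.closedBall 0 ‖x‖) x := by
  have hfeas : ∀ᶠ ε : ℝ in 𝓝[>] 0, x + ε • (g * x) ∈ feasibleSet f := by
    refine eventually_all.2 fun i => eventually_imp_distrib_left.2 fun hi => ?_
    rcases hf i hi with hneg | hneg | hconst
    · exact (eventually_eval_add_smul_neg (g * x) hneg).mono fun _ => le_of_lt
    · exact (eventually_eval_add_smul_lt_of_eulerDeriv_neg hneg).mono
        fun _ hε => hε.le.trans (hx i hi)
    · exact .of_forall fun ε => (eval_add_smul_eq_of_not_notConstOn hconst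
        (fun _ => Function.notMem_support.1) ε).trans_le (hx i hi)
  obtain ⟨ε, hS, hε, hlt⟩ := (hfeas.and ((eventually_norm_add_smul_mul_le hnorm).and
    (eventually_eval_add_smul_lt_of_eulerDeriv_neg h0))).exists
  exact fun hmin => (hmin ⟨hS, mem_closedBall_zero_iff.2 hε⟩).not_gt hlt

end Descent

section DescentDirection

variable {n p : ℕ} {q ξ : Fin n → ℝ}

theorem pderiv_facePoly_eq_zero {J : Set (Fin n)} {Δ : Set (Fin n → ℝ)} {j : Fin n}
    (f : MvPolynomial (Fin n) ℝ) (hΔ : Δ ⊆ RJ J) (hj : j ∉ J) :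
    pderiv j (facePoly f Δ) = 0 := by
  rw [facePoly, map_sum]
  refine Finset.sum_eq_zero fun κ hκ => ?_
  rw [pderiv_monomial, ← expVec_apply, hΔ (Finset.mem_filter.1 hκ).2 j hj, mul_zero, map_zero]

theorem eval_eulerDeriv_div_facePoly {Δ : Set (Fin n → ℝ)} (f : MvPolynomial (Fin n) ℝ)
    (v : Fin n → ℝ) (hΔ : Δ ⊆ RJ (Function.support ξ)) :
    eval ξ (eulerDeriv (v / ξ) (facePoly f Δ)) =
      ∑ j, eval ξ (pderiv j (facePoly f Δ)) * v j := by
  rw [eval_eulerDeriv]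
  refine Finset.sum_congr rfl fun j _ => ?_
  by_cases hj : ξ j = 0
  · simp [pderiv_facePoly_eq_zero f hΔ (Function.notMem_support.2 hj)]
  · rw [Pi.div_apply]
    field_simp

theorem MFinfty.exists_eulerDeriv_neg {f : Fin (p + 1) → MvPolynomial (Fin n) ℝ} (hMF : MFinfty f)
    {j₀ : Fin n} (hξ : ξ j₀ ≠ 0) (hq₀ : q j₀ < 0) (hq : NewtonD (f 0) q < 0)
    (hface : ∀ i, NotConstOn (f i) (Function.support ξ) →
      NewtonFace (f i) q ⊆ RJ (Function.support ξ))
    (hle : ∀ i, i ≠ 0 → eval ξ (facePoly (f i) (NewtonFace (f i) q)) ≤ 0) :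
    ∃ g : Fin n → ℝ, (∀ j, q j = q j₀ → g j < 0) ∧
      ∀ i, NotConstOn (f i) (Function.support ξ) →
        eval ξ (facePoly (f i) (NewtonFace (f i) q)) = 0 →
        eval ξ (eulerDeriv g (facePoly (f i) (NewtonFace (f i) q))) < 0 := by
  obtain ⟨v, -, hv⟩ := hMF _ ⟨j₀, hξ⟩ q ξ hq hface (fun _ => Function.notMem_support.symm) hle
  -- By Euler's identity, adding `t • q` does not change the derivatives at zeros of the `f_Δ`.
  have hlarge : ∀ᶠ t : ℝ in atTop, ∀ j, q j = q j₀ → (v / ξ + t • q) j < 0 := by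
    refine eventually_all.2 fun j => eventually_imp_distrib_left.2 fun hj => ?_
    exact (tendsto_atBot_add_const_left _ _
      (tendsto_id.atTop_mul_const_of_neg (hj.trans_lt hq₀))).eventually_lt_atBot 0
  obtain ⟨t, ht⟩ := hlarge.exists
  refine ⟨v / ξ + t • q, ht, fun i hi hi0 => ?_⟩
  rw [eval_eulerDeriv_add_smul, eval_eulerDeriv_div_facePoly _ _ (hface i hi),
    eulerDeriv_facePoly_newtonFace, map_mul, hi0, mul_zero, mul_zero, add_zero]
  exact hv i hi hi0

end DescentDirection

section Minimization

theorem exists_isMinOn_or_tendsto_norm_atTop {E α : Type*} [SeminormedAddCommGroup E]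
    [ProperSpace E] [LinearOrder α] [TopologicalSpace α] [ClosedIicTopology α] {S : Set E}
    (hS : IsClosed S) (hSne : S.Nonempty) {g : E → α} (hg : ContinuousOn g S) :
    (∃ x ∈ S, IsMinOn g S x) ∨
      ∃ x : ℕ → E, (∀ k, x k ∈ S) ∧ (∀ k, IsMinOn g (S ∩ Metric.closedBall 0 ‖x k‖) (x k)) ∧
        Tendsto (fun k => ‖x k‖) atTop atTop := by
  obtain ⟨s, hs⟩ := hSne
  have hball (R : ℝ) (hR : ‖s‖ ≤ R) :
      ∃ y ∈ S ∩ Metric.closedBall 0 R, IsMinOn g (S ∩ Metric.closedBall 0 R) y :=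
    ((isCompact_closedBall 0 R).inter_left hS).exists_isMinOn
      ⟨s, hs, mem_closedBall_zero_iff.2 hR⟩ (hg.mono inter_subset_left)
  choose x hx hxmin using fun k : ℕ => hball (‖s‖ + k) (by simp)
  refine or_iff_not_imp_right.2 fun hunbdd => ?_
  have hle (k : ℕ) : ‖x k‖ ≤ ‖s‖ + k := mem_closedBall_zero_iff.1 (hx k).2
  have hfreq : ∃ R, ∃ᶠ k in atTop, ‖x k‖ < R := by
    by_contra! hR
    refine hunbdd ⟨x, fun k => (hx k).1, fun k => (hxmin k).on_subset ?_, ?_⟩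
    · exact inter_subset_inter_right S (Metric.closedBall_subset_closedBall (hle k))
    · exact tendsto_atTop.2 hR
  obtain ⟨R, hR⟩ := hfreq
  obtain ⟨z, hz, hzmin⟩ := hball (max ‖s‖ R) (le_max_left _ _)
  refine ⟨z, hz.1, fun y hy => ?_⟩
  obtain ⟨k, hkR, hk⟩ := (hR.and_eventually (eventually_ge_atTop ⌈‖y‖⌉₊)).exists
  have hyk : ‖y‖ ≤ ‖s‖ + k := (Nat.ceil_le.1 hk).trans (le_add_of_nonneg_left (norm_nonneg s))
  calc g z ≤ g (x k) :=
        hzmin ⟨(hx k).1, mem_closedBall_zero_iff.2 (hkR.le.trans (le_max_right _ _))⟩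
    _ ≤ g y := hxmin k ⟨hy, mem_closedBall_zero_iff.2 hyk⟩

theorem IsToricAsymptotic.eventually_not_isMinOn {n p : ℕ} {ι : Type*} {l : Filter ι}
    {x : ι → Fin n → ℝ} {T : Finset (Fin n →₀ ℕ)} {q ξ g : Fin n → ℝ}
    {f : Fin (p + 1) → MvPolynomial (Fin n) ℝ} (h : IsToricAsymptotic l x T q ξ)
    (hfT : ∀ i, (f i).support ⊆ T)
    (h0 : eval ξ (eulerDeriv g (facePoly (f 0) (NewtonFace (f 0) q))) < 0)
    (hf : ∀ i ≠ 0, NotConstOn (f i) (Function.support ξ) →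
      eval ξ (facePoly (f i) (NewtonFace (f i) q)) < 0 ∨
        eval ξ (eulerDeriv g (facePoly (f i) (NewtonFace (f i) q))) < 0)
    (hnorm : ∀ j, g j < 0 ∨ ∀ᶠ k in l, |x k j| < ‖x k‖) :
    ∀ᶠ k in l, x k ∈ feasibleSet f →
      ¬ IsMinOn (eval · (f 0)) (feasibleSet f ∩ Metric.closedBall 0 ‖x k‖) (x k) := by
  have hdesc (i) (hi : eval ξ (eulerDeriv g (facePoly (f i) (NewtonFace (f i) q))) < 0) :
      ∀ᶠ k in l, eval (x k) (eulerDeriv g (f i)) < 0 :=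
    h.eventually_eval_neg (hfT i) (support_eulerDeriv_subset g _) (by rwa [← eulerDeriv_facePoly])
  have hcases : ∀ᶠ k in l, ∀ i ≠ 0, eval (x k) (f i) < 0 ∨ eval (x k) (eulerDeriv g (f i)) < 0 ∨
      ¬ NotConstOn (f i) (Function.support (x k)) := by
    refine eventually_all.2 fun i => eventually_imp_distrib_left.2 fun hi => ?_
    by_cases hconst : NotConstOn (f i) (Function.support ξ)
    · rcases hf i hi hconst with hneg | hneg
      · exact (h.eventually_eval_neg (hfT i) subset_rfl hneg).mono fun _ => .inl
      · exact (hdesc i hneg).mono fun _ hk => .inr (.inl hk)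
    · exact h.eventually_support_eq.mono fun _ hk => .inr (.inr (hk ▸ hconst))
  have hdecay : ∀ᶠ k in l, ∀ j, g j < 0 ∨ |x k j| < ‖x k‖ :=
    eventually_all.2 fun j => eventually_or_distrib_left.2 (hnorm j)
  filter_upwards [hdesc 0 h0, hcases, hdecay] with k hk0 hk hkx hxk
  exact not_isMinOn_of_eulerDeriv_neg hxk hk0 hk hkx

theorem not_tendsto_norm_atTop_of_isMinOn {n p : ℕ} {f : Fin (p + 1) → MvPolynomial (Fin n) ℝ}
    (hMF : MFinfty f) (hconv : Convenient (f 0)) {x : ℕ → Fin n → ℝ} {b : ℝ}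
    (hx : ∀ k, x k ∈ feasibleSet f) (hb : ∀ k, b ≤ eval (x k) (f 0))
    (hmin : ∀ k, IsMinOn (eval · (f 0)) (feasibleSet f ∩ Metric.closedBall 0 ‖x k‖) (x k)) :
    ¬ Tendsto (fun k => ‖x k‖) atTop atTop := by
  intro hnorm
  let U : Ultrafilter ℕ := .of atTop
  have hU : Tendsto (fun k => ‖x k‖) U atTop := hnorm.mono_left (Ultrafilter.of_le _)
  let T : Finset (Fin n →₀ ℕ) := (Finset.univ.biUnion fun i => (f i).support) ∪
    insert 0 (Finset.univ.image fun j => Finsupp.single j 1)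
  have hfT (i) : (f i).support ⊆ T :=
    (Finset.subset_biUnion_of_mem (fun i => (f i).support) (Finset.mem_univ i)).trans
      Finset.subset_union_left
  have h0 : 0 ∈ T := by simp [T]
  obtain ⟨q, ξ, h⟩ := exists_isToricAsymptotic U x T
  obtain ⟨j₀, hξ, hq₀, hdom⟩ := h.exists_dominant_coordinate h0 (by simp [T]) hU
  have hface (i) (hi : NotConstOn (f i) (Function.support ξ)) :
      NewtonFace (f i) q ⊆ RJ (Function.support ξ) := h.newtonFace_subset_RJ (hfT i) hi
  have hle (i) (hi : i ≠ 0) : eval ξ (facePoly (f i) (NewtonFace (f i) q)) ≤ 0 :=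
    h.eval_facePoly_nonpos (hfT i) (.of_forall fun k => hx k i hi)
  have hzero : eval ξ (facePoly (f 0) (NewtonFace (f 0) q)) = 0 :=
    h.eval_facePoly_eq_zero_of_bounded (hfT 0) h0 (hconv.newtonD_neg hq₀) (.of_forall hb) <|
      (hU.eventually_ge_atTop ‖x 0‖).mono fun k hk => hmin k ⟨hx 0, mem_closedBall_zero_iff.2 hk⟩
  obtain ⟨g, hg, hgf⟩ := hMF.exists_eulerDeriv_neg hξ hq₀ (hconv.newtonD_neg hq₀) hface hle
  have hnotMin := h.eventually_not_isMinOn hfT (hgf 0 (hconv.notConstOn ⟨j₀, hξ⟩) hzero)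
    (fun i hi hconst => (hle i hi).lt_or_eq.imp_right (hgf i hconst))
    (fun j => (hdom j).imp_left (hg j))
  obtain ⟨k, hk⟩ := hnotMin.exists
  exact hk (hx k) (hmin k)

end Minimization

/-- **Theorem 3.2 (A Frank–Wolfe type theorem).** -/
theorem frank_wolfe_type {n p : ℕ} (f : Fin (p + 1) → MvPolynomial (Fin n) ℝ)
    (hnc : ∀ i, ∃ x y : Fin n → ℝ, eval x (f i) ≠ eval y (f i))
    (S : Set (Fin n → ℝ))
    (hS : S = {x | ∀ i, i ≠ 0 → eval x (f i) ≤ 0})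
    (hSne : S.Nonempty)
    (hbdd : BddBelow ((fun x => eval x (f 0)) '' S))
    (hMF : MFinfty f)
    (hconv : Convenient (f 0)) :
    ∃ xs ∈ S, eval xs (f 0) = sInf ((fun x => eval x (f 0)) '' S) := by
  obtain rfl : S = feasibleSet f := hS
  obtain ⟨b, hb⟩ := hbdd
  rcases exists_isMinOn_or_tendsto_norm_atTop (isClosed_feasibleSet f) hSne
    (f 0).continuous_eval.continuousOn with ⟨x, hx, hxmin⟩ | ⟨x, hx, hxmin, hnorm⟩
  · exact ⟨x, hx, .symm <| IsLeast.csInf_eq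
      ⟨mem_image_of_mem _ hx, forall_mem_image.2 (isMinOn_iff.1 hxmin)⟩⟩
  · exact absurd hnorm <| not_tendsto_norm_atTop_of_isMinOn hMF hconv hx
      (fun k => hb (mem_image_of_mem _ (hx k))) hxmin
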